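/- For coprime positive integers s ≥ 2 and t, the sum over all (s,t)-cores λ of the reciprocal of the order of the stabiliser of λ under the level-t action of W̃_s on s-cores equals t^{s-1}/s!. -/

import Mathlib

/-- A partition: a weakly decreasing, eventually-zero sequence of naturals
(0-indexed: `f i` is the `(i+1)`-th part). -/
structure Partn where
  f : ℕ → ℕ
  antitone : Antitone f
  eventually_zero : ∃ N, ∀ i, N ≤ i → f i = 0

/-- The beta-set `B(λ) = {λ_i - i : i ≥ 1}`. -/
def betaSet (p : Partn) : Set ℤ := {b | ∃ i : ℕ, b = (p.f i : ℤ) - (i + 1)}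

/-- `conjCount p j` is the `(j+1)`-th part of the conjugate partition. -/
noncomputable def conjCount (p : Partn) (j : ℕ) : ℕ := Set.ncard {i : ℕ | j + 1 ≤ p.f i}

/-- Hook length of the cell in row `r+1`, column `c+1` (1-indexed formula
`1 + (λ_r - r) + (λ'_c - c)`). -/
noncomputable def hookLen (p : Partn) (r c : ℕ) : ℤ :=
  1 + ((p.f r : ℤ) - (r + 1)) + ((conjCount p c : ℤ) - (c + 1))

/-- `p` is an `s`-core: no hook length is divisible by `s`. -/
def IsCore (s : ℕ) (p : Partn) : Prop :=
  ∀ r c : ℕ, c < p.f r → ¬ ((s : ℤ) ∣ hookLen p r c)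

/-- `p` is self-conjugate. -/
def SelfConj (p : Partn) : Prop := ∀ j, p.f j = conjCount p j

/-- The `s`-set of an `s`-core: `S(λ) = (B(λ)+s) \ B(λ)`. -/
def sSet (s : ℕ) (p : Partn) : Set ℤ := {x | x - s ∈ betaSet p ∧ x ∉ betaSet p}

/-- An `s`-set: `s` integers, pairwise incongruent mod `s`, summing to `C(s,2)`. -/
def IsSSet (s : ℕ) (X : Set ℤ) : Prop :=
  X.ncard = s ∧ (∀ a ∈ X, ∀ b ∈ X, a ≠ b → ¬ ((s : ℤ) ∣ (a - b))) ∧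
    (∑ᶠ x ∈ X, x) = (s.choose 2 : ℤ)

/-- The affine symmetric group `W̃_s`, as a set of permutations of `ℤ`:
`w(m+s) = w(m)+s` and `w(0)+⋯+w(s-1) = C(s,2)`. -/
def AffSymSet (s : ℕ) : Set (Equiv.Perm ℤ) :=
  {w | (∀ m : ℤ, w (m + s) = w m + s) ∧
    (∑ i ∈ Finset.range s, w (i : ℤ)) = (s.choose 2 : ℤ)}

/-- The underlying function of the Coxeter generator `w_i` of `W̃_s`, where `a = i - 1`:
swaps `m` and `m+1` whenever `m ≡ i - 1 (mod s)`. -/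
def genFun (s : ℕ) (a : ℤ) : ℤ → ℤ := fun m =>
  if (s : ℤ) ∣ (m - a) then m + 1 else if (s : ℤ) ∣ (m - a - 1) then m - 1 else m

lemma genFun_involutive (s : ℕ) (hs : 2 ≤ s) (a : ℤ) :
    Function.Involutive (genFun s a) := by
  have h1 : ¬ ((s : ℤ) ∣ 1) := by
    intro h
    have := Int.le_of_dvd one_pos h
    omega
  intro m
  unfold genFun
  by_cases hA : (s : ℤ) ∣ (m - a)
  · rw [if_pos hA]
    have hB : ¬ (s : ℤ) ∣ (m + 1 - a) := by
      intro h
      have := dvd_sub h hA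
      rw [show m + 1 - a - (m - a) = 1 by ring] at this
      exact h1 this
    rw [if_neg hB, if_pos (by rw [show m + 1 - a - 1 = m - a by ring]; exact hA)]
    ring
  · rw [if_neg hA]
    by_cases hB : (s : ℤ) ∣ (m - a - 1)
    · rw [if_pos hB, if_pos (by rw [show m - 1 - a = m - a - 1 by ring]; exact hB)]
      ring
    · rw [if_neg hB, if_neg hA, if_neg hB]

/-- The Coxeter generator `w_i` of `W̃_s`, where `a = i - 1`. -/
def genPerm (s : ℕ) (hs : 2 ≤ s) (a : ℤ) : Equiv.Perm ℤ :=
  (genFun_involutive s hs a).toPerm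

/-- The constant `c = (s-1)(t-1)/2`. -/
def lc (s t : ℕ) : ℤ := (((s : ℤ) - 1) * ((t : ℤ) - 1)) / 2

/-- The image `ẘ_i` of the generator `w_i` under the level `t` action on `ℤ`:
`m ↦ m + t` if `m ≡ (i-1)t - c (mod s)`, `m ↦ m - t` if `m ≡ it - c (mod s)`,
`m ↦ m` otherwise. -/
def levelGenFun (s t : ℕ) (i : ℤ) : ℤ → ℤ := fun m =>
  if (s : ℤ) ∣ (m - ((i - 1) * t - lc s t)) then m + t
  else if (s : ℤ) ∣ (m - (i * t - lc s t)) then m - t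
  else m

/-- `Φ` is (the restriction to `W̃_s` of) the level `t` action of `W̃_s` on `ℤ`:
a multiplicative map on `W̃_s` sending each generator `w_i` to `ẘ_i`. -/
def IsLevelTAction (s t : ℕ) (hs : 2 ≤ s) (Φ : Equiv.Perm ℤ → Equiv.Perm ℤ) : Prop :=
  (∀ w v : Equiv.Perm ℤ, w ∈ AffSymSet s → v ∈ AffSymSet s → Φ (w * v) = Φ w * Φ v) ∧
  (∀ i m : ℤ, Φ (genPerm s hs (i - 1)) m = levelGenFun s t i m)

/-- Removing a rim hook of length `t`, in terms of beta-sets: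
`μ` is obtained from `λ` by removing a rim `t`-hook. -/
def RemoveHook (t : ℕ) (p q : Partn) : Prop :=
  ∃ b ∈ betaSet p, b - t ∉ betaSet p ∧ betaSet q = insert (b - t) (betaSet p \ {b})

open Finset

section Window

variable {s : ℕ} {d : ℤ} {h : ℤ → ℤ}

lemma map_add_mul_of_map_add (hh : ∀ j, h (j + s) = h j + d) (j k : ℤ) :
    h (j + s * k) = h j + k * d := by
  induction k using Int.induction_on with
  | zero => simp
  | succ k ih =>
    rw [show j + s * ((k : ℤ) + 1) = j + s * k + s by ring, hh, ih]; ring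
  | pred k ih =>
    have := hh (j + s * (-(k : ℤ) - 1))
    rw [show j + s * (-(k : ℤ) - 1) + s = j + s * -(k : ℤ) by ring, ih] at this
    linarith

lemma sum_window_add (hh : ∀ j, h (j + s) = h j + d) (q : ℤ) :
    ∑ i ∈ range s, h (q + i) = ∑ i ∈ range s, h i + q * d := by
  have step : ∀ q : ℤ, ∑ i ∈ range s, h (q + 1 + i) = ∑ i ∈ range s, h (q + i) + d := by
    intro q
    have h1 := sum_range_succ (fun i : ℕ => h (q + i)) s
    have h2 := sum_range_succ' (fun i : ℕ => h (q + i)) s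
    have h3 : ∀ i : ℕ, h (q + 1 + i) = h (q + ((i + 1 : ℕ) : ℤ)) := by
      intro i; congr 1; push_cast; ring
    simp only [h3]
    have := hh q
    simp only [Nat.cast_zero, add_zero] at h2
    linarith
  induction q using Int.induction_on with
  | zero => simp
  | succ k ih => rw [step, ih]; ring
  | pred k ih =>
    have := step (-(k : ℤ) - 1)
    rw [sub_add_cancel, ih] at this
    linarith

lemma sum_window_eq (hh : ∀ j, h (j + s) = h j) (q : ℤ) :
    ∑ i ∈ range s, h (q + i) = ∑ i ∈ range s, h i := by
  simpa using sum_window_add (d := 0) (by simpa using hh) q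

lemma sum_range_eq_sum_zmod [NeZero s] (h : ℤ → ℤ) :
    ∑ i ∈ range s, h i = ∑ z : ZMod s, h z.val := by
  refine sum_bij' (fun i _ => (i : ZMod s)) (fun z _ => z.val) ?_ ?_ ?_ ?_ ?_
  · simp
  · intro z _; simpa using z.val_lt
  · intro i hi; exact ZMod.val_cast_of_lt (by simpa using hi)
  · intro z _; exact ZMod.natCast_zmod_val z
  · intro i hi; rw [ZMod.val_cast_of_lt (by simpa using hi)]

lemma apply_eq_of_intCast_eq {α : Type*} {h : ℤ → α} (hh : ∀ j, h (j + s) = h j) {a b : ℤ}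
    (hab : (a : ZMod s) = b) : h a = h b := by
  obtain ⟨k, hk⟩ := (ZMod.intCast_eq_intCast_iff_dvd_sub _ _ _).1 hab
  have hper : Function.Periodic h (s : ℤ) := hh
  rw [show b = a + k * s by linarith]
  exact (hper.int_mul k a).symm

end Window

section AffineGroup

variable {s : ℕ}

lemma sum_range_cast_eq_choose (s : ℕ) : ∑ i ∈ range s, (i : ℤ) = (s.choose 2 : ℤ) := by
  rw [← Nat.cast_sum, Finset.sum_range_id, Nat.choose_two_right]

lemma genFun_add (i m : ℤ) : genFun s i (m + s) = genFun s i m + s := by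
  have h1 : (s : ℤ) ∣ (m + s - i) ↔ (s : ℤ) ∣ (m - i) := by
    rw [show m + s - i = (m - i) + s by ring]; exact dvd_add_self_right
  have h2 : (s : ℤ) ∣ (m + s - i - 1) ↔ (s : ℤ) ∣ (m - i - 1) := by
    rw [show m + s - i - 1 = (m - i - 1) + s by ring]; exact dvd_add_self_right
  unfold genFun
  simp only [h1, h2]
  split_ifs <;> ring

lemma genFun_self (i : ℤ) : genFun s i i = i + 1 := by simp [genFun]

lemma genFun_succ (hs : 2 ≤ s) (i : ℤ) : genFun s i (i + 1) = i := by
  have : genFun s i (genFun s i i) = i := genFun_involutive s hs i i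
  rwa [genFun_self] at this

lemma genFun_of_two_le (i : ℤ) {k : ℕ} (h2 : 2 ≤ k) (hk : k < s) :
    genFun s i (i + k) = i + k := by
  have hA : ¬ (s : ℤ) ∣ (i + k - i) := by
    intro h
    have := Int.le_of_dvd (by omega) h
    omega
  have hB : ¬ (s : ℤ) ∣ (i + k - i - 1) := by
    intro h
    have := Int.le_of_dvd (by omega) h
    omega
  rw [genFun, if_neg hA, if_neg hB]

lemma genPerm_apply (hs : 2 ≤ s) (i m : ℤ) : genPerm s hs i m = genFun s i m := rfl

lemma genPerm_mul_self (hs : 2 ≤ s) (i : ℤ) : genPerm s hs i * genPerm s hs i = 1 := by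
  ext m
  exact genFun_involutive s hs i m

lemma mem_affSymSet_iff {w : Equiv.Perm ℤ} :
    w ∈ AffSymSet s ↔ (∀ m : ℤ, w (m + s) = w m + s) ∧
      ∑ i ∈ range s, (w (i : ℤ) - i) = 0 := by
  rw [sum_sub_distrib, sum_range_cast_eq_choose, sub_eq_zero]
  rfl

/-- The effect of right multiplication by a generator on a sum over a window. -/
lemma sum_window_mul_genPerm (hs : 2 ≤ s) (w : Equiv.Perm ℤ) (i : ℤ) (F : ℤ → ℤ → ℤ)
    (hF : ∀ m, F (w (m + s)) (m + s) = F (w m) m)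
    (hF' : ∀ m, F ((w * genPerm s hs i) (m + s)) (m + s) = F ((w * genPerm s hs i) m) m) :
    ∑ k ∈ range s, F ((w * genPerm s hs i) k) k + F (w i) i + F (w (i + 1)) (i + 1) =
      ∑ k ∈ range s, F (w k) k + F (w (i + 1)) i + F (w i) (i + 1) := by
  rw [← sum_window_eq (h := fun m => F ((w * genPerm s hs i) m) m) hF' i,
    ← sum_window_eq (h := fun m => F (w m) m) hF i]
  obtain ⟨n, rfl⟩ := Nat.exists_eq_add_of_le' hs
  rw [sum_range_succ', sum_range_succ', sum_range_succ', sum_range_succ']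
  have : ∀ k ∈ range n, F ((w * genPerm (n + 2) hs i) (i + ((k + 1 + 1 : ℕ) : ℤ)))
      (i + ((k + 1 + 1 : ℕ) : ℤ)) =
      F (w (i + ((k + 1 + 1 : ℕ) : ℤ))) (i + ((k + 1 + 1 : ℕ) : ℤ)) := by
    intro k hk
    have hk' := mem_range.1 hk
    rw [Equiv.Perm.mul_apply, genPerm_apply, genFun_of_two_le i (by omega) (by omega)]
  rw [sum_congr rfl this]
  simp only [Equiv.Perm.mul_apply, genPerm_apply, Nat.cast_zero, zero_add, Nat.cast_one, add_zero,
    genFun_self, genFun_succ hs]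
  ring

lemma mul_genPerm_add (hs : 2 ≤ s) {w : Equiv.Perm ℤ} (hw : ∀ m : ℤ, w (m + s) = w m + s)
    (i m : ℤ) : (w * genPerm s hs i) (m + s) = (w * genPerm s hs i) m + s := by
  rw [Equiv.Perm.mul_apply, genPerm_apply, genFun_add, hw]; rfl

lemma mul_genPerm_mem (hs : 2 ≤ s) {w : Equiv.Perm ℤ} (hw : w ∈ AffSymSet s) (i : ℤ) :
    w * genPerm s hs i ∈ AffSymSet s := by
  rw [mem_affSymSet_iff] at hw ⊢
  refine ⟨mul_genPerm_add hs hw.1 i, ?_⟩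
  have := sum_window_mul_genPerm hs w i (fun x m => x - m)
    (fun m => by simp only [hw.1]; ring)
    (fun m => by simp only [mul_genPerm_add hs hw.1]; ring)
  linarith [hw.2]

lemma one_mem_affSymSet : (1 : Equiv.Perm ℤ) ∈ AffSymSet s := by
  simp [mem_affSymSet_iff]

lemma genPerm_mem (hs : 2 ≤ s) (i : ℤ) : genPerm s hs i ∈ AffSymSet s := by
  simpa using mul_genPerm_mem hs one_mem_affSymSet i

lemma eq_one_of_strictMono {w : Equiv.Perm ℤ} (hs : 0 < s) (hw : w ∈ AffSymSet s)
    (h : StrictMono w) : w = 1 := by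
  have step : ∀ j, w (j + 1) = w j + 1 := by
    intro j
    refine le_antisymm ?_ (h (by omega : j < j + 1))
    obtain ⟨k, hk⟩ := w.surjective (w j + 1)
    rw [← hk]
    have : w j < w k := by omega
    exact h.monotone (h.lt_iff_lt.1 this)
  have hc : ∀ j : ℤ, w j = j + w 0 := by
    intro j
    have := map_add_mul_of_map_add (s := 1) (d := 1) (h := w) (by simpa using step) 0 j
    simp only [zero_add, Nat.cast_one, one_mul, mul_one] at this
    rw [this, add_comm]
  have h0 := (mem_affSymSet_iff.1 hw).2
  simp only [hc (_ : ℕ), add_sub_cancel_left, sum_const, card_range, nsmul_eq_mul] at h0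
  have : w 0 = 0 := by
    rcases mul_eq_zero.1 h0 with h0 | h0
    · omega
    · exact h0
  ext j
  simp [hc j, this]

/-- Induction along descents: every affine permutation is reduced to `1` by multiplying on the
right by generators at descents. -/
lemma affSymSet_descent_induction (hs : 2 ≤ s) {P : Equiv.Perm ℤ → Prop} (one : P 1)
    (step : ∀ w ∈ AffSymSet s, ∀ i, w (i + 1) < w i → P (w * genPerm s hs i) → P w)
    {w : Equiv.Perm ℤ} (hw : w ∈ AffSymSet s) : P w := by
  generalize hn : (∑ k ∈ range s, (w k - k) ^ 2).toNat = n
  induction n using Nat.strong_induction_on generalizing w with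
  | _ n ih =>
  by_cases hd : ∃ i, w (i + 1) < w i
  · obtain ⟨i, hi⟩ := hd
    refine step w hw i hi (ih _ ?_ (mul_genPerm_mem hs hw i) rfl)
    have hwp := hw.1
    have := sum_window_mul_genPerm hs w i (fun x m => (x - m) ^ 2)
      (fun m => by simp only [hwp]; ring)
      (fun m => by simp only [mul_genPerm_add hs hwp]; ring)
    have h0 : 0 ≤ ∑ k ∈ range s, ((w * genPerm s hs i) k - k) ^ 2 :=
      sum_nonneg fun _ _ => sq_nonneg _
    have : ∑ k ∈ range s, ((w * genPerm s hs i) k - k) ^ 2 < ∑ k ∈ range s, (w k - k) ^ 2 := by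
      nlinarith
    omega
  · push Not at hd
    have : StrictMono w := by
      refine strictMono_int_of_lt_succ fun i => lt_of_le_of_ne (hd i) fun h => ?_
      have := w.injective h
      omega
    rwa [eq_one_of_strictMono (by omega) hw this]

end AffineGroup

section BetaSet

lemma lt_conjCount_iff (p : Partn) (i c : ℕ) : i < conjCount p c ↔ c < p.f i := by
  have hex : ∃ n, p.f n ≤ c := by
    obtain ⟨N, hN⟩ := p.eventually_zero
    exact ⟨N, by rw [hN N le_rfl]; omega⟩
  classical
  have hset : {i : ℕ | c + 1 ≤ p.f i} = ((range (Nat.find hex) : Finset ℕ) : Set ℕ) := by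
    ext i
    simp only [Set.mem_ofPred_eq, coe_range, Set.mem_Iio, Nat.lt_find_iff, not_le]
    refine ⟨fun h m hm => ?_, fun h => h i le_rfl⟩
    have := p.antitone hm
    omega
  have hcard : conjCount p c = Nat.find hex := by
    rw [conjCount, hset, Set.ncard_coe_finset, card_range]
  rw [hcard, ← mem_range, ← mem_coe, ← hset]
  rfl

lemma mem_betaSet {p : Partn} {b : ℤ} : b ∈ betaSet p ↔ ∃ i : ℕ, b = (p.f i : ℤ) - (i + 1) :=
  Iff.rfl

lemma sub_conjCount_notMem (p : Partn) (c : ℕ) : (c : ℤ) - conjCount p c ∉ betaSet p := by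
  rintro ⟨i, hi⟩
  have := lt_conjCount_iff p i c
  omega

lemma lt_sub_conjCount_iff (p : Partn) (i c : ℕ) :
    (c : ℤ) - conjCount p c < p.f i - (i + 1) ↔ c < p.f i := by
  have := lt_conjCount_iff p i c
  omega

lemma exists_eq_sub_conjCount {p : Partn} {y : ℤ} (hy : y ∉ betaSet p) :
    ∃ c : ℕ, y = (c : ℤ) - conjCount p c := by
  have hex : ∃ i : ℕ, (p.f i : ℤ) - (i + 1) < y := by
    obtain ⟨N, hN⟩ := p.eventually_zero
    refine ⟨N + y.natAbs, ?_⟩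
    rw [hN _ (by omega)]
    omega
  classical
  obtain ⟨i, hi, hmin⟩ : ∃ i : ℕ, (p.f i : ℤ) - (i + 1) < y ∧
      ∀ m < i, y ≤ (p.f m : ℤ) - (m + 1) :=
    ⟨Nat.find hex, Nat.find_spec hex, fun m hm => not_lt.1 (Nat.find_min hex hm)⟩
  refine ⟨(y + i).toNat, ?_⟩
  have h1 := lt_conjCount_iff p i (y + i).toNat
  have h2 : i ≤ conjCount p (y + i).toNat := by
    rcases Nat.eq_zero_or_pos i with h0 | h0
    · omega
    · have h3 := lt_conjCount_iff p (i - 1) (y + i).toNat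
      have h4 := hmin (i - 1) (by omega)
      have h5 : y ≠ (p.f (i - 1) : ℤ) - ((i - 1 : ℕ) + 1) := fun h => hy ⟨_, h⟩
      omega
  omega

lemma isCore_iff_forall_dvd {u : ℕ} {p : Partn} :
    IsCore u p ↔ ∀ b ∈ betaSet p, ∀ y ∉ betaSet p, y < b → ¬ (u : ℤ) ∣ b - y := by
  have key : ∀ r c, hookLen p r c = ((p.f r : ℤ) - (r + 1)) - ((c : ℤ) - conjCount p c) := by
    intro r c; unfold hookLen; ring
  constructor
  · rintro h b ⟨r, rfl⟩ y hy hlt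
    obtain ⟨c, rfl⟩ := exists_eq_sub_conjCount hy
    rw [← key]
    exact h r c ((lt_sub_conjCount_iff p r c).1 hlt)
  · intro h r c hc
    rw [key]
    exact h _ ⟨r, rfl⟩ _ (sub_conjCount_notMem p c) ((lt_sub_conjCount_iff p r c).2 hc)

lemma isCore_iff_sub_mem {u : ℕ} (hu : 0 < u) {p : Partn} :
    IsCore u p ↔ ∀ b ∈ betaSet p, b - u ∈ betaSet p := by
  rw [isCore_iff_forall_dvd]
  constructor
  · intro h b hb
    by_contra hn
    exact h b hb _ hn (by omega) (by simp)
  · rintro h b hb y hy hlt ⟨k, hk⟩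
    have hmem : ∀ n : ℕ, b - u * n ∈ betaSet p := by
      intro n
      induction n with
      | zero => simpa using hb
      | succ n ih =>
        have := h _ ih
        rwa [show b - u * ((n + 1 : ℕ) : ℤ) = b - u * n - u by push_cast; ring]
    have hk0 : 0 < k := by
      by_contra hk0
      have : (u : ℤ) * k ≤ 0 := mul_nonpos_of_nonneg_of_nonpos (by omega) (by omega)
      omega
    lift k to ℕ using hk0.le
    exact hy (by simpa [show y = b - u * k by linarith] using hmem k)

lemma betaSet_strictAnti (p : Partn) : StrictAnti fun i : ℕ => (p.f i : ℤ) - (i + 1) := by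
  refine strictAnti_nat_of_succ_lt fun i => ?_
  have := p.antitone (Nat.le_succ i)
  push_cast
  simp only [Nat.succ_eq_add_one] at this
  omega

lemma betaSet_injective : Function.Injective betaSet := by
  intro p q h
  have hr : Set.range (fun i : ℕ => -((p.f i : ℤ) - (i + 1))) =
      Set.range fun i : ℕ => -((q.f i : ℤ) - (i + 1)) := by
    ext b
    have := Set.ext_iff.1 h (-b)
    simp only [mem_betaSet] at this
    simp only [Set.mem_range, neg_eq_iff_eq_neg]
    simpa only [eq_comm] using this
  have := (StrictMono.range_inj (fun _ _ hij => neg_lt_neg (betaSet_strictAnti p hij))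
    (fun _ _ hij => neg_lt_neg (betaSet_strictAnti q hij))).1 hr
  obtain ⟨f, hf, hf'⟩ := p
  obtain ⟨g, hg, hg'⟩ := q
  have : f = g := by
    ext i
    have := congrFun this i
    simp only at this
    omega
  subst this
  rfl

lemma exists_forall_ge_notMem_betaSet (p : Partn) : ∃ N : ℤ, ∀ b, N ≤ b → b ∉ betaSet p := by
  refine ⟨p.f 0, ?_⟩
  rintro b hb ⟨i, rfl⟩
  have := p.antitone (Nat.zero_le i)
  omega

lemma exists_forall_lt_mem_betaSet (p : Partn) :
    ∃ N : ℕ, ∀ M : ℕ, N ≤ M → (∀ b : ℤ, b < -M → b ∈ betaSet p) ∧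
      ({b | b ∈ betaSet p ∧ -(M : ℤ) ≤ b}).ncard = M := by
  obtain ⟨N, hN⟩ := p.eventually_zero
  refine ⟨N, fun M hM => ⟨fun b hb => ⟨(-b - 1).toNat, ?_⟩, ?_⟩⟩
  · rw [hN _ (by omega)]
    push_cast
    omega
  · have : {b | b ∈ betaSet p ∧ -(M : ℤ) ≤ b} =
        (((range M).image fun i : ℕ => (p.f i : ℤ) - (i + 1) : Finset ℤ) : Set ℤ) := by
      ext b
      simp only [Set.mem_ofPred_eq, coe_image, coe_range, Set.mem_image, Set.mem_Iio, mem_betaSet]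
      constructor
      · rintro ⟨⟨i, rfl⟩, hi⟩
        refine ⟨i, ?_, rfl⟩
        by_contra hlt
        rw [hN i (by omega)] at hi
        push_cast at hi
        omega
      · rintro ⟨i, hi, rfl⟩
        exact ⟨⟨i, rfl⟩, by omega⟩
    rw [this, Set.ncard_coe_finset, card_image_of_injective _ (betaSet_strictAnti p).injective,
      card_range]

/-- A set of integers containing all sufficiently small integers and no sufficiently large ones
is a translate of a beta-set. -/
lemma exists_betaSet_translate {B : Set ℤ} {L U : ℤ} (hL : ∀ b < L, b ∈ B)
    (hU : ∀ b, U ≤ b → b ∉ B) : ∃ (p : Partn) (d : ℤ), ∀ b, b ∈ betaSet p ↔ b + d ∈ B := by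
  classical
  set P : ℕ → Prop := fun n => U - n ∈ B with hP
  set N := (U - L + 1).toNat with hN
  have hPN : ∀ n, N ≤ n → P n := fun n hn => hL _ (by omega)
  have hinf : (Set.ofPred P).Infinite :=
    (Set.Ici_infinite N).mono fun n hn => hPN n hn
  have hcount : ∀ k, Nat.count P (N + k) = Nat.count P N + k := by
    intro k
    induction k with
    | zero => rfl
    | succ k ih => rw [← add_assoc, Nat.count_succ, ih, if_pos (hPN _ (by omega))]; ring
  set C := Nat.count P N with hC
  have hCN : C ≤ N := Nat.count_le P
  have hnth : ∀ i, C ≤ i → Nat.nth P i = N + (i - C) := by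
    intro i hi
    have := Nat.nth_count (p := P) (hPN (N + (i - C)) (by omega))
    rwa [hcount, show C + (i - C) = i by omega] at this
  have hmono := Nat.nth_strictMono hinf
  have hanti : Antitone fun i : ℕ => (N : ℤ) - C + i - Nat.nth P i := by
    refine antitone_nat_of_succ_le fun i => ?_
    have : Nat.nth P i < Nat.nth P (i + 1) := hmono (Nat.lt_succ_self i)
    push_cast
    omega
  have hnonneg : ∀ i : ℕ, 0 ≤ (N : ℤ) - C + i - Nat.nth P i := by
    intro i
    have h1 : (N : ℤ) - C + ((i + C : ℕ) : ℤ) - Nat.nth P (i + C) ≤ _ :=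
      hanti (Nat.le_add_right i C)
    rw [hnth _ (by omega)] at h1
    push_cast at h1
    omega
  refine ⟨⟨fun i => ((N : ℤ) - C + i - Nat.nth P i).toNat, fun i j hij =>
    Int.toNat_le_toNat (hanti hij), C, fun i hi => ?_⟩, U - N + C + 1, fun b => ?_⟩
  · simp only [hnth i hi]
    omega
  · rw [mem_betaSet]
    constructor
    · rintro ⟨i, rfl⟩
      have h1 := Nat.nth_mem_of_infinite hinf i
      have h2 := hnonneg i
      simp only [hP] at h1
      convert h1 using 1
      simp only [Int.toNat_of_nonneg h2]
      ring
    · intro hb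
      have hlt : b + (U - N + C + 1) < U := by
        by_contra hge
        exact hU _ (by omega) hb
      obtain ⟨n, hn⟩ := Int.eq_ofNat_of_zero_le (show 0 ≤ U - (b + (U - N + C + 1)) by omega)
      have hPn : P n := by
        simp only [hP]
        rwa [← hn, sub_sub_cancel]
      refine ⟨Nat.count P n, ?_⟩
      have h2 := hnonneg (Nat.count P n)
      simp only [Nat.nth_count hPn] at h2 ⊢
      omega

end BetaSet

/-- An integer sequence that drops by `t` over each period `s` and sums to zero over a period. -/
structure IsProfile (s t : ℕ) (f : ℤ → ℤ) : Prop where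
  map_add : ∀ j, f (j + s) = f j - t
  sum_eq_zero : ∑ i ∈ range s, f i = 0

/-- `f j` locates the first gap of the beta-set of `p` in the residue class of `j * t - c`
modulo `s`. -/
def Encodes (s t : ℕ) (p : Partn) (f : ℤ → ℤ) : Prop :=
  ∀ j m : ℤ, j * t - lc s t + s * m ∈ betaSet p ↔ m < f j

section Encoding

variable {s t : ℕ}

lemma IsProfile.map_add_mul {f : ℤ → ℤ} (hf : IsProfile s t f) (j k : ℤ) :
    f (j + s * k) = f j - k * t := by
  rw [map_add_mul_of_map_add (h := f) (d := -t) (by simpa [sub_eq_add_neg] using hf.map_add)]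
  ring

lemma two_mul_lc (hst : Nat.Coprime s t) : 2 * lc s t = ((s : ℤ) - 1) * ((t : ℤ) - 1) := by
  unfold lc
  refine Int.mul_ediv_cancel' ?_
  rcases Nat.even_or_odd s with h | h
  · have ht : Odd t := by
      rw [← Nat.not_even_iff_odd]
      intro h'
      have := Nat.dvd_gcd h.two_dvd h'.two_dvd
      rw [hst] at this
      omega
    obtain ⟨k, rfl⟩ := ht
    exact Dvd.dvd.mul_left ⟨(k : ℤ), by push_cast; ring⟩ _
  · obtain ⟨k, rfl⟩ := h
    exact Dvd.dvd.mul_right ⟨(k : ℤ), by push_cast; ring⟩ _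

lemma dvd_sub_of_dvd_mul_sub (hst : Nat.Coprime s t) {a b : ℤ}
    (h : (s : ℤ) ∣ a * t - b * t) : (s : ℤ) ∣ a - b := by
  rw [← sub_mul] at h
  exact (Nat.isCoprime_iff_coprime.2 hst).dvd_of_dvd_mul_right h

lemma exists_eq_mul_sub_add (hs : 0 < s) (hst : Nat.Coprime s t) (b : ℤ) :
    ∃ j m : ℤ, 0 ≤ j ∧ j < s ∧ b = j * t - lc s t + s * m := by
  obtain ⟨u, v, huv⟩ := Nat.isCoprime_iff_coprime.2 hst
  set x := (b + lc s t) * v with hx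
  refine ⟨x % s, (b + lc s t) * u + x / s * t, Int.emod_nonneg _ (by omega),
    Int.emod_lt_of_pos _ (by omega), ?_⟩
  have h1 := Int.emod_add_mul_ediv x s
  linear_combination (-t : ℤ) * h1 - (b + lc s t) * huv - (t : ℤ) * hx

lemma Encodes.partn_eq (hs : 0 < s) (hst : Nat.Coprime s t) {p q : Partn} {f : ℤ → ℤ}
    (hp : Encodes s t p f) (hq : Encodes s t q f) : p = q := by
  refine betaSet_injective (Set.ext fun b => ?_)
  obtain ⟨j, m, -, -, rfl⟩ := exists_eq_mul_sub_add hs hst b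
  rw [hp, hq]

lemma Encodes.profile_eq {p : Partn} {f g : ℤ → ℤ}
    (hf : Encodes s t p f) (hg : Encodes s t p g) : f = g := by
  ext j
  have h1 := (hf j (f j)).symm.trans (hg j (f j))
  have h2 := (hf j (g j)).symm.trans (hg j (g j))
  omega

lemma Encodes.mem_sSet_iff {p : Partn} {f : ℤ → ℤ} (hf : Encodes s t p f) (j m : ℤ) :
    j * t - lc s t + s * m ∈ sSet s p ↔ m = f j := by
  have h1 := hf j m
  have h2 := hf j (m - 1)
  rw [show j * t - lc s t + s * (m - 1) = j * t - lc s t + s * m - s by ring] at h2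
  simp only [sSet, Set.mem_ofPred_eq, h1, h2]
  omega

lemma sum_emod_eq_choose (hs : 0 < s) {y : ℕ → ℤ}
    (hy : Set.InjOn (fun i => y i % s) (range s)) :
    (range s).image (fun i => (y i % s).toNat) = range s ∧
      ∑ i ∈ range s, y i % s = (s.choose 2 : ℤ) := by
  have h0 : ∀ i, 0 ≤ y i % s := fun i => Int.emod_nonneg _ (by omega)
  have hlt : ∀ i, y i % s < s := fun i => Int.emod_lt_of_pos _ (by omega)
  have hinj : Set.InjOn (fun i => (y i % s).toNat) (range s) := by
    intro i hi j hj hij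
    refine hy hi hj ?_
    have := h0 i
    have := h0 j
    simp only at hij ⊢
    omega
  have himg : (range s).image (fun i => (y i % s).toNat) = range s := by
    refine eq_of_subset_of_card_le ?_ (by rw [card_image_of_injOn hinj])
    intro k hk
    obtain ⟨i, -, rfl⟩ := mem_image.1 hk
    have := h0 i
    have := hlt i
    simp only [mem_range]
    omega
  refine ⟨himg, ?_⟩
  have h1 := sum_image (f := fun k : ℕ => (k : ℤ)) hinj
  rw [himg, sum_range_cast_eq_choose] at h1
  rw [h1]
  exact sum_congr rfl fun i _ => (Int.toNat_of_nonneg (h0 i)).symm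

/-- The first gaps of a beta-set in the residue classes modulo `s` sum to `C(s, 2)`. -/
lemma sum_gaps_eq_choose (hs : 0 < s) {p : Partn} {y f : ℕ → ℤ}
    (hy : Set.InjOn (fun i => y i % s) (range s))
    (h : ∀ i < s, ∀ m : ℤ, y i + s * m ∈ betaSet p ↔ m < f i) :
    ∑ i ∈ range s, (y i + s * f i) = (s.choose 2 : ℤ) := by
  obtain ⟨himg, hsum⟩ := sum_emod_eq_choose hs hy
  have hs' : (0 : ℤ) < s := by exact_mod_cast hs
  obtain ⟨N, hN⟩ := exists_forall_lt_mem_betaSet p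
  obtain ⟨M, hMN, hM⟩ : ∃ M : ℕ, N ≤ M ∧ ∀ i < s, 0 ≤ f i + M + y i / s := by
    refine ⟨N + ∑ i ∈ range s, (f i + y i / s).natAbs, by omega, fun i hi => ?_⟩
    have := single_le_sum (f := fun i => (f i + y i / s).natAbs)
      (fun _ _ => Nat.zero_le _) (mem_range.2 hi)
    omega
  have hcard := (hN (s * M) (by nlinarith)).2
  have hset : {b | b ∈ betaSet p ∧ -((s * M : ℕ) : ℤ) ≤ b} =
      ((((range s).sigma fun i => Ico (-(M : ℤ) - y i / s) (f i)).image
        fun x => y x.1 + s * x.2 : Finset ℤ) : Set ℤ) := by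
    have hle : ∀ i m, -((s * M : ℕ) : ℤ) ≤ y i + s * m ↔ -(M : ℤ) - y i / s ≤ m := by
      intro i m
      have h1 := Int.emod_add_mul_ediv (y i) s
      have h2 := Int.emod_nonneg (y i) hs'.ne'
      have h3 := Int.emod_lt_of_pos (y i) hs'
      push_cast
      constructor <;> intro h4
      · by_contra h5
        nlinarith
      · nlinarith
    ext b
    simp only [Set.mem_ofPred_eq, coe_image, Set.mem_image, mem_coe, mem_sigma, mem_range,
      mem_Ico, Sigma.exists]
    constructor
    · rintro ⟨hb, hlow⟩
      have hmem : (b % s).toNat ∈ range s := by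
        have := Int.emod_nonneg b hs'.ne'
        have := Int.emod_lt_of_pos b hs'
        simp only [mem_range]
        omega
      rw [← himg, mem_image] at hmem
      obtain ⟨i, hi, hib⟩ := hmem
      have hi' := mem_range.1 hi
      have hmod : y i % s = b % s := by
        have := Int.emod_nonneg b hs'.ne'
        have := Int.emod_nonneg (y i) hs'.ne'
        omega
      obtain ⟨m, hm⟩ := (Int.ModEq.dvd hmod : (s : ℤ) ∣ _)
      obtain rfl : b = y i + s * m := by linarith
      exact ⟨i, m, ⟨hi', (hle i m).1 hlow, (h i hi' m).1 hb⟩, rfl⟩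
    · rintro ⟨i, m, ⟨hi, hlow, hm⟩, rfl⟩
      exact ⟨(h i hi m).2 hm, (hle i m).2 hlow⟩
  have hinj : Set.InjOn (fun x : (_ : ℕ) × ℤ => y x.1 + s * x.2)
      ((range s).sigma fun i => Ico (-(M : ℤ) - y i / s) (f i)) := by
    rintro ⟨i, m⟩ hi ⟨j, n⟩ hj hij
    simp only [coe_sigma, Set.mem_sigma_iff] at hi hj hij
    obtain rfl : i = j := by
      refine hy hi.1 hj.1 ?_
      simpa using congrArg (· % (s : ℤ)) hij
    have : m = n := by simpa [hs.ne'] using hij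
    rw [this]
  rw [hset, Set.ncard_coe_finset, card_image_of_injOn hinj, card_sigma] at hcard
  have hcard' : ∑ i ∈ range s, (f i + M + y i / s) = s * M := by
    have := congrArg (Nat.cast : ℕ → ℤ) hcard
    push_cast at this
    rw [← this]
    refine sum_congr rfl fun i hi => ?_
    have := hM i (mem_range.1 hi)
    rw [Int.card_Ico]
    omega
  simp only [sum_add_distrib, sum_const, card_range, nsmul_eq_mul] at hcard'
  have hdiv : ∑ i ∈ range s, y i = ∑ i ∈ range s, y i % s + s * ∑ i ∈ range s, y i / s := by
    rw [mul_sum, ← sum_add_distrib]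
    exact sum_congr rfl fun i _ => (Int.emod_add_mul_ediv _ _).symm
  rw [sum_add_distrib, ← mul_sum, hdiv, hsum]
  linear_combination (s : ℤ) * hcard'

lemma sum_mul_sub_lc (hst : Nat.Coprime s t) :
    ∑ i ∈ range s, ((i : ℤ) * t - lc s t) = (s.choose 2 : ℤ) := by
  rw [sum_sub_distrib, ← sum_mul, sum_range_cast_eq_choose, sum_const, card_range, nsmul_eq_mul]
  have h1 := two_mul_lc hst
  have h2 : 2 * (s.choose 2 : ℤ) = s * (s - 1) := by
    have := Finset.sum_range_id_mul_two s
    rw [← sum_range_cast_eq_choose, ← Nat.cast_sum]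
    rcases s with _ | s
    · simp
    · have := congrArg (Nat.cast : ℕ → ℤ) this
      push_cast at this ⊢
      linarith
  nlinarith

lemma injOn_mul_sub_emod (hst : Nat.Coprime s t) (d : ℤ) :
    Set.InjOn (fun i : ℕ => ((i : ℤ) * t - d) % s) (range s) := by
  intro i hi j hj hij
  have h1 := (Int.ModEq.dvd hij : (s : ℤ) ∣ _)
  rw [sub_sub_sub_cancel_right] at h1
  have h2 := Int.eq_zero_of_abs_lt_dvd (dvd_sub_of_dvd_mul_sub hst h1) (by
    simp only [coe_range, Set.mem_Iio] at hi hj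
    rw [abs_lt]
    omega)
  omega

lemma exists_encodes (hs : 0 < s) (hst : Nat.Coprime s t) (ht : 0 < t) {p : Partn}
    (hps : IsCore s p) (hpt : IsCore t p) :
    ∃ f, Encodes s t p f ∧ IsProfile s t f ∧ Antitone f := by
  have hs' : (0 : ℤ) < s := by exact_mod_cast hs
  rw [isCore_iff_sub_mem hs] at hps
  rw [isCore_iff_sub_mem ht] at hpt
  have hex : ∀ y : ℤ, ∃ k, ∀ m : ℤ, y + s * m ∈ betaSet p ↔ m < k := by
    intro y
    obtain ⟨U, hU⟩ := exists_forall_ge_notMem_betaSet p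
    obtain ⟨N, hN⟩ := exists_forall_lt_mem_betaSet p
    obtain ⟨g, hg, hmax⟩ := Int.exists_greatest_of_bdd (P := fun m => y + s * m ∈ betaSet p)
      ⟨|U| + |y|, fun z hz => by
        by_contra hlt
        refine hU _ ?_ hz
        have := le_abs_self U
        have := neg_abs_le y
        have := abs_nonneg U
        have := abs_nonneg y
        nlinarith⟩
      ⟨-(N + |y| + 1), (hN N le_rfl).1 _ (by
        have := le_abs_self y
        have := abs_nonneg y
        nlinarith)⟩
    refine ⟨g + 1, fun m => ⟨fun h => Int.lt_add_one_of_le (hmax m h), fun h => ?_⟩⟩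
    have hmem : ∀ n : ℕ, y + s * (g - n) ∈ betaSet p := by
      intro n
      induction n with
      | zero => simpa using hg
      | succ n ih =>
        have := hps _ ih
        rwa [show y + s * (g - ((n + 1 : ℕ) : ℤ)) = y + s * (g - n) - s by push_cast; ring]
    have := hmem (g - m).toNat
    rwa [Int.toNat_of_nonneg (by omega), sub_sub_cancel] at this
  choose k hk using hex
  have henc : Encodes s t p fun j => k (j * t - lc s t) := fun j m => hk _ m
  refine ⟨_, henc, ⟨fun j => ?_, ?_⟩, antitone_int_of_succ_le fun j => ?_⟩
  · have h : ∀ m, m < k ((j + s) * t - lc s t) ↔ m + t < k (j * t - lc s t) := by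
      intro m
      rw [← hk, ← hk]
      ring_nf
    have h1 := h (k ((j + s) * t - lc s t))
    have h2 := h (k (j * t - lc s t) - t)
    have h3 := h (k (j * t - lc s t) - t - 1)
    omega
  · have h1 := sum_gaps_eq_choose hs (p := p) (y := fun i => (i : ℤ) * t - lc s t)
      (f := fun i => k ((i : ℤ) * t - lc s t)) (injOn_mul_sub_emod hst _) fun i _ m => hk _ m
    rw [sum_add_distrib, sum_mul_sub_lc hst, ← mul_sum] at h1
    have h2 : (s : ℤ) * ∑ i ∈ range s, k ((i : ℤ) * t - lc s t) = 0 := by linarith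
    exact (mul_eq_zero.1 h2).resolve_left hs'.ne'
  · have h1 := (henc (j + 1) (k ((j + 1) * t - lc s t) - 1)).2 (by simp)
    have h2 := hpt _ h1
    rw [show (j + 1) * (t : ℤ) - lc s t + s * (k ((j + 1) * t - lc s t) - 1) - t =
      j * t - lc s t + s * (k ((j + 1) * t - lc s t) - 1) by ring, hk] at h2
    omega

lemma exists_core_encodes (hs : 0 < s) (hst : Nat.Coprime s t) (ht : 0 < t) {f : ℤ → ℤ}
    (hf : IsProfile s t f) (hanti : Antitone f) :
    ∃ p, IsCore s p ∧ IsCore t p ∧ Encodes s t p f := by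
  have hs' : (0 : ℤ) < s := by exact_mod_cast hs
  set B : Set ℤ := {b | ∃ j m : ℤ, b = j * t - lc s t + s * m ∧ m < f j} with hB
  have hmem : ∀ j m : ℤ, j * t - lc s t + s * m ∈ B ↔ m < f j := by
    intro j m
    refine ⟨?_, fun h => ⟨j, m, rfl, h⟩⟩
    rintro ⟨j', m', heq, hlt⟩
    obtain ⟨k, hk⟩ := dvd_sub_of_dvd_mul_sub hst
      (show (s : ℤ) ∣ j' * t - j * t from ⟨m - m', by linarith⟩)
    obtain rfl : j' = j + s * k := by linarith
    rw [hf.map_add_mul] at hlt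
    have h1 : (s : ℤ) * m = s * (m' + k * t) := by linarith
    have := mul_left_cancel₀ hs'.ne' h1
    linarith
  obtain ⟨p, d, hp⟩ := exists_betaSet_translate (B := B)
    (L := -|lc s t| + s * f s) (U := s * f 0 + s * t + |lc s t|)
    (fun b hb => by
      obtain ⟨j, m, hj0, hjs, rfl⟩ := exists_eq_mul_sub_add hs hst b
      rw [hmem]
      refine lt_of_lt_of_le ?_ (hanti hjs.le)
      have := neg_abs_le (lc s t)
      have := le_abs_self (lc s t)
      have : 0 ≤ j * t := by positivity
      by_contra hle
      nlinarith)
    (fun b hb => by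
      obtain ⟨j, m, hj0, hjs, rfl⟩ := exists_eq_mul_sub_add hs hst b
      rw [hmem, not_lt]
      refine (hanti hj0).trans ?_
      have := neg_abs_le (lc s t)
      have := le_abs_self (lc s t)
      have : j * t ≤ s * t := by gcongr
      by_contra hle
      nlinarith)
  have hd : d = 0 := by
    have h1 := sum_gaps_eq_choose hs (p := p) (y := fun i => (i : ℤ) * t - (lc s t + d))
      (f := fun i => f i) (injOn_mul_sub_emod hst _) fun i _ m => by
        rw [hp, ← hmem]
        ring_nf
    have h2 : ∑ i ∈ range s, ((i : ℤ) * t - (lc s t + d) + s * f i) =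
        ∑ i ∈ range s, ((i : ℤ) * t - lc s t) + s * ∑ i ∈ range s, f i - s * d := by
      simp only [sum_add_distrib, sum_sub_distrib, sum_const, card_range, nsmul_eq_mul, mul_sum]
      ring
    rw [h2, sum_mul_sub_lc hst, hf.sum_eq_zero] at h1
    have h3 : (s : ℤ) * d = 0 := by linarith
    exact (mul_eq_zero.1 h3).resolve_left hs'.ne'
  have henc : Encodes s t p f := fun j m => by rw [hp, hd, add_zero, hmem]
  refine ⟨p, (isCore_iff_sub_mem hs).2 fun b hb => ?_, (isCore_iff_sub_mem ht).2 fun b hb => ?_,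
    henc⟩
  · obtain ⟨j, m, -, -, rfl⟩ := exists_eq_mul_sub_add hs hst b
    rw [henc] at hb
    rw [show j * (t : ℤ) - lc s t + s * m - s = j * t - lc s t + s * (m - 1) by ring, henc]
    omega
  · obtain ⟨j, m, -, -, rfl⟩ := exists_eq_mul_sub_add hs hst b
    rw [henc] at hb
    rw [show j * (t : ℤ) - lc s t + s * m - t = (j - 1) * t - lc s t + s * m by ring, henc]
    exact hb.trans_le (hanti (by omega))

end Encoding

section Stabiliser

variable {s t : ℕ}

lemma levelAction_apply (hs : 2 ≤ s) (hst : Nat.Coprime s t) {Φ : Equiv.Perm ℤ → Equiv.Perm ℤ}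
    (hΦ : IsLevelTAction s t hs Φ) {w : Equiv.Perm ℤ} (hw : w ∈ AffSymSet s) (j m : ℤ) :
    Φ w (j * t - lc s t + s * m) = w j * t - lc s t + s * m := by
  have hgen : ∀ i j m : ℤ, Φ (genPerm s hs i) (j * t - lc s t + s * m) =
      genPerm s hs i j * t - lc s t + s * m := by
    intro i j m
    have hdvd : ∀ k : ℤ, (s : ℤ) ∣ j * t - lc s t + s * m - (k * t - lc s t) ↔
        (s : ℤ) ∣ j - k := by
      intro k
      rw [show j * t - lc s t + s * m - (k * t - lc s t) = (j - k) * t + s * m by ring,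
        dvd_add_left (dvd_mul_right _ _)]
      refine ⟨fun h => dvd_sub_of_dvd_mul_sub hst (by rwa [← sub_mul]), fun h => h.mul_right _⟩
    have h := hΦ.2 (i + 1) (j * t - lc s t + s * m)
    rw [add_sub_cancel_right] at h
    rw [h, genPerm_apply, levelGenFun, genFun, add_sub_cancel_right]
    simp only [hdvd, sub_sub]
    split_ifs <;> ring
  have hone : Φ 1 = 1 := by
    have := hΦ.1 1 1 one_mem_affSymSet one_mem_affSymSet
    rwa [mul_one, left_eq_mul] at this
  revert j m
  refine affSymSet_descent_induction hs
    (P := fun w => ∀ j m, Φ w (j * t - lc s t + s * m) = w j * t - lc s t + s * m)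
    (by simp [hone]) (fun w hw i _ ih j m => ?_) hw
  have h := hΦ.1 _ _ (mul_genPerm_mem hs hw i) (genPerm_mem hs i)
  rw [mul_assoc, genPerm_mul_self, mul_one] at h
  rw [h, Equiv.Perm.mul_apply, hgen, ih, ← Equiv.Perm.mul_apply, mul_assoc, genPerm_mul_self,
    mul_one]

lemma image_sSet_eq_iff (hs : 2 ≤ s) (hst : Nat.Coprime s t) {Φ : Equiv.Perm ℤ → Equiv.Perm ℤ}
    (hΦ : IsLevelTAction s t hs Φ) {p : Partn} {f : ℤ → ℤ} (hf : Encodes s t p f)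
    {w : Equiv.Perm ℤ} (hw : w ∈ AffSymSet s) :
    ⇑(Φ w) '' sSet s p = sSet s p ↔ ∀ j, f (w j) = f j := by
  constructor
  · intro h j
    have h1 := Set.mem_image_of_mem (Φ w) ((hf.mem_sSet_iff j (f j)).2 rfl)
    rw [levelAction_apply hs hst hΦ hw, h, hf.mem_sSet_iff] at h1
    exact h1.symm
  · intro h
    ext x
    obtain ⟨j, m, -, -, rfl⟩ := exists_eq_mul_sub_add (by omega : 0 < s) hst x
    constructor
    · rintro ⟨y, hy, hyx⟩
      obtain ⟨j', m', -, -, rfl⟩ := exists_eq_mul_sub_add (by omega : 0 < s) hst y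
      rw [← hyx, levelAction_apply hs hst hΦ hw, hf.mem_sSet_iff, h, ← hf.mem_sSet_iff]
      exact hy
    · intro hx
      obtain ⟨j, rfl⟩ := w.surjective j
      refine ⟨j * t - lc s t + s * m, ?_, levelAction_apply hs hst hΦ hw j m⟩
      rwa [hf.mem_sSet_iff, ← h, ← hf.mem_sSet_iff]

/-- The reduction of a profile to a map from residues modulo `s` to residues modulo `t`. -/
def profileMod (s t : ℕ) (f : ℤ → ℤ) (z : ZMod s) : ZMod t := (f z.val : ZMod t)

variable {f g : ℤ → ℤ}

lemma IsProfile.profileMod_intCast [NeZero s] (hf : IsProfile s t f) (j : ℤ) :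
    profileMod s t f j = f j := by
  have h : ((((j : ZMod s).val : ℕ) : ℤ) : ZMod s) = (j : ZMod s) := by simp
  obtain ⟨k, hk⟩ := (ZMod.intCast_eq_intCast_iff_dvd_sub _ _ _).1 h
  rw [profileMod, show j = ((j : ZMod s).val : ℤ) + s * k by linarith, hf.map_add_mul]
  simp

lemma IsProfile.eq_of_apply_eq (ht : 0 < t) (hf : IsProfile s t f) {a b : ℤ}
    (hab : (a : ZMod s) = b) (h : f a = f b) : a = b := by
  obtain ⟨k, hk⟩ := (ZMod.intCast_eq_intCast_iff_dvd_sub _ _ _).1 hab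
  obtain rfl : b = a + s * k := by linarith
  rw [hf.map_add_mul] at h
  have : k * (t : ℤ) = 0 := by linarith
  have : k = 0 := (mul_eq_zero.1 this).resolve_right (by omega)
  simp [this]

lemma IsProfile.exists_apply_eq [NeZero s] (hf : IsProfile s t f) {r : ZMod s} {v : ℤ}
    (h : profileMod s t f r = v) : ∃ n : ℤ, (n : ZMod s) = r ∧ f n = v := by
  obtain ⟨k, hk⟩ := (ZMod.intCast_eq_intCast_iff_dvd_sub _ _ _).1 h
  refine ⟨r.val - s * k, by simp, ?_⟩
  rw [sub_eq_add_neg, ← mul_neg, hf.map_add_mul]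
  linarith

lemma IsProfile.sum_comp_eq (hf : IsProfile s t f) [NeZero s] {w : ℤ → ℤ}
    (σ : Equiv.Perm (ZMod s)) (hσ : ∀ j : ℤ, (w j : ZMod s) = σ j) :
    ∑ i ∈ range s, (t * w i + s * f (w i)) = t * ∑ i ∈ range s, (i : ℤ) := by
  set G : ℤ → ℤ := fun n => t * n + s * f n with hG
  have hper : ∀ j, G (j + s) = G j := by
    intro j
    simp only [hG, hf.map_add]
    ring
  have h1 : ∑ i ∈ range s, G (w i) = ∑ i ∈ range s, G i := by
    rw [sum_range_eq_sum_zmod fun i => G (w i), sum_range_eq_sum_zmod G,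
      ← Equiv.sum_comp σ fun z => G z.val]
    refine sum_congr rfl fun z _ => apply_eq_of_intCast_eq hper ?_
    rw [hσ]
    simp
  refine h1.trans ?_
  simp only [hG, sum_add_distrib, ← mul_sum, hf.sum_eq_zero, mul_zero, add_zero]

/-- A permutation of the residues matching two reduced profiles lifts to an affine permutation
matching the profiles. -/
lemma IsProfile.exists_lift [NeZero s] (ht : 0 < t) (hf : IsProfile s t f)
    (hg : IsProfile s t g) (σ : Equiv.Perm (ZMod s))
    (hσ : ∀ z, profileMod s t g (σ z) = profileMod s t f z) :
    ∃ w ∈ AffSymSet s, (∀ j, g (w j) = f j) ∧ ∀ j : ℤ, (w j : ZMod s) = σ j := by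
  have h1 : ∀ j : ℤ, ∃ n : ℤ, (n : ZMod s) = σ j ∧ g n = f j := fun j =>
    hg.exists_apply_eq (by rw [hσ, hf.profileMod_intCast])
  have h2 : ∀ j : ℤ, ∃ n : ℤ, (n : ZMod s) = σ.symm j ∧ f n = g j := fun j =>
    hf.exists_apply_eq (by rw [← hσ, Equiv.apply_symm_apply, hg.profileMod_intCast])
  choose w hw hgw using h1
  choose w' hw' hfw' using h2
  refine ⟨⟨w, w', fun j => hf.eq_of_apply_eq ht ?_ ?_, fun j => hg.eq_of_apply_eq ht ?_ ?_⟩,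
    mem_affSymSet_iff.2 ⟨fun m => hg.eq_of_apply_eq ht ?_ ?_, ?_⟩, hgw, hw⟩
  · rw [hw', hw, Equiv.symm_apply_apply]
  · rw [hfw', hgw]
  · rw [hw, hw', Equiv.apply_symm_apply]
  · rw [hgw, hfw']
  · simp [hw]
  · simp only [Equiv.coe_fn_mk]
    rw [hgw, hf.map_add, hg.map_add, hgw]
  · have h := hg.sum_comp_eq σ hw
    simp only [hgw, sum_add_distrib, ← mul_sum, hf.sum_eq_zero, mul_zero, add_zero] at h
    have h3 := mul_left_cancel₀ (by exact_mod_cast ht.ne') h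
    simp only [Equiv.coe_fn_mk, sum_sub_distrib, h3, sub_self]

lemma exists_perm_zmod_of_mem_affSymSet [NeZero s] {w : Equiv.Perm ℤ} (hw : w ∈ AffSymSet s) :
    ∃ σ : Equiv.Perm (ZMod s), ∀ j : ℤ, (w j : ZMod s) = σ j := by
  have hmul : ∀ j k : ℤ, w (j + s * k) = w j + k * s := map_add_mul_of_map_add hw.1
  have hcast : ∀ j : ℤ, ((w j : ℤ) : ZMod s) = (w ((j : ZMod s).val : ℕ) : ZMod s) := fun j =>
    apply_eq_of_intCast_eq (s := s) (h := fun j => ((w j : ℤ) : ZMod s))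
      (fun j => by simp only [hw.1, Int.cast_add, Int.cast_natCast, ZMod.natCast_self, add_zero])
      (by rw [Int.cast_natCast, ZMod.natCast_zmod_val])
  have hinj : Function.Injective fun z : ZMod s => ((w (z.val : ℤ) : ℤ) : ZMod s) := by
    intro x y hxy
    obtain ⟨k, hk⟩ := (ZMod.intCast_eq_intCast_iff_dvd_sub _ _ _).1 hxy
    have h1 : w (y.val : ℤ) = w (x.val + s * k) := by
      rw [hmul]
      linarith
    have h2 := congrArg (Int.cast : ℤ → ZMod s) (w.injective h1)
    simpa using h2.symm
  exact ⟨Equiv.ofBijective _ (Finite.injective_iff_bijective.1 hinj), hcast⟩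

lemma card_stabiliser_eq [NeZero s] (hs : 2 ≤ s) (ht : 0 < t) (hst : Nat.Coprime s t)
    {Φ : Equiv.Perm ℤ → Equiv.Perm ℤ} (hΦ : IsLevelTAction s t hs Φ) {p : Partn}
    (hp : Encodes s t p f) (hf : IsProfile s t f) :
    Nat.card {w : Equiv.Perm ℤ // w ∈ AffSymSet s ∧ ⇑(Φ w) '' sSet s p = sSet s p} =
      Nat.card {σ : Equiv.Perm (ZMod s) // profileMod s t f ∘ σ = profileMod s t f} := by
  choose w hw hfw hσ using fun σ : {σ : Equiv.Perm (ZMod s) //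
    profileMod s t f ∘ σ = profileMod s t f} => hf.exists_lift ht hf σ.1 (congrFun σ.2)
  refine (Nat.card_eq_of_bijective (fun σ => ⟨w σ, hw σ,
    (image_sSet_eq_iff hs hst hΦ hp (hw σ)).2 (hfw σ)⟩) ⟨fun σ τ h => ?_, ?_⟩).symm
  · have h1 : w σ = w τ := congrArg Subtype.val h
    refine Subtype.ext (Equiv.ext fun z => ?_)
    have h2 := hσ σ (z.val : ℤ)
    rw [h1, hσ τ] at h2
    simpa using h2.symm
  · rintro ⟨v, hv, himg⟩
    have hfv := (image_sSet_eq_iff hs hst hΦ hp hv).1 himg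
    obtain ⟨σ, hvσ⟩ := exists_perm_zmod_of_mem_affSymSet hv
    refine ⟨⟨σ, funext fun z => ?_⟩, Subtype.ext (Equiv.ext fun j => ?_)⟩
    · have := hf.profileMod_intCast (v z.val)
      rw [hvσ, hfv] at this
      simpa [profileMod] using this
    · refine hf.eq_of_apply_eq ht ?_ ?_
      · rw [hσ, hvσ]
      · rw [hfw, hfv]

/-- Antitone profiles with the same reduction up to a permutation of the residues coincide. -/
lemma IsProfile.eq_of_antitone [NeZero s] (hs : 2 ≤ s) (ht : 0 < t) (hf : IsProfile s t f)
    (hg : IsProfile s t g) (hfa : Antitone f) (hga : Antitone g) (σ : Equiv.Perm (ZMod s))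
    (hσ : ∀ z, profileMod s t g (σ z) = profileMod s t f z) : f = g := by
  obtain ⟨w, hw, hgw, -⟩ := hf.exists_lift ht hg σ hσ
  revert hgw
  refine affSymSet_descent_induction hs (P := fun w => (∀ j, g (w j) = f j) → f = g)
    (fun h => funext fun j => (h j).symm) (fun w hw i hi ih h => ih fun j => ?_) hw
  have hi' : f (i + 1) = f i :=
    le_antisymm (hfa (by omega)) (by rw [← h, ← h]; exact hga hi.le)
  rw [Equiv.Perm.mul_apply, h, genPerm_apply, genFun]
  split_ifs with h1 h2
  · obtain ⟨k, hk⟩ := h1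
    rw [show j + 1 = i + 1 + s * k by linarith, show j = i + s * k by linarith,
      hf.map_add_mul, hf.map_add_mul, hi']
  · obtain ⟨k, hk⟩ := h2
    rw [show j - 1 = i + s * k by linarith, show j = i + 1 + s * k by linarith,
      hf.map_add_mul, hf.map_add_mul, hi']
  · rfl

end Stabiliser

section Counting

lemma card_fiber_mul_card_stabiliser {α β : Type*} [Fintype α] [DecidableEq α] [Fintype β]
    [DecidableEq β] (T : Finset (α → β)) (κ : α → β)
    (hT : ∀ σ : Equiv.Perm α, κ ∘ σ ∈ T) [DecidablePred fun g => ∃ σ : Equiv.Perm α, κ ∘ σ = g] :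
    #{g ∈ T | ∃ σ : Equiv.Perm α, κ ∘ σ = g} *
      Nat.card {σ : Equiv.Perm α // κ ∘ σ = κ} = (Fintype.card α).factorial := by
  rw [← Fintype.card_perm, ← card_univ,
    card_eq_sum_card_fiberwise (s := univ) (f := fun σ : Equiv.Perm α => κ ∘ σ)
    (t := T.filter fun g => ∃ σ : Equiv.Perm α, κ ∘ σ = g)
    (fun σ _ => by simpa using hT σ), ← smul_eq_mul, ← sum_const]
  refine sum_congr rfl fun g hg => ?_
  obtain ⟨σ₀, rfl⟩ := (mem_filter.1 hg).2
  rw [Nat.subtype_card (univ.filter fun σ : Equiv.Perm α => κ ∘ σ = κ)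
    (by simp)]
  refine card_bij' (fun σ _ => σ * σ₀) (fun σ _ => σ * σ₀⁻¹) ?_ ?_ ?_ ?_
  · intro σ hσ
    have h : κ ∘ σ = κ := (mem_filter.1 hσ).2
    refine mem_filter.2 ⟨mem_univ _, ?_⟩
    rw [Equiv.Perm.coe_mul, ← Function.comp_assoc, h]
  · intro σ hσ
    have h : κ ∘ σ = κ ∘ σ₀ := (mem_filter.1 hσ).2
    refine mem_filter.2 ⟨mem_univ _, ?_⟩
    rw [Equiv.Perm.coe_mul, ← Function.comp_assoc, h, Function.comp_assoc, ← Equiv.Perm.coe_mul,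
      mul_inv_cancel, Equiv.Perm.coe_one, Function.comp_id]
  · simp
  · simp

lemma card_filter_sum_eq_zero (s t : ℕ) [NeZero s] [NeZero t] :
    #{g : ZMod s → ZMod t | ∑ z, g z = 0} = t ^ (s - 1) := by
  have hfib : ∀ c : ZMod t, #{g : ZMod s → ZMod t | ∑ z, g z = c} =
      #{g : ZMod s → ZMod t | ∑ z, g z = 0} := by
    intro c
    refine card_bij' (fun g _ => g - Pi.single 0 c) (fun g _ => g + Pi.single 0 c) ?_ ?_ ?_ ?_ <;>
      simp +contextual [sum_add_distrib, sum_sub_distrib]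
  have h := card_eq_sum_card_fiberwise (s := (univ : Finset (ZMod s → ZMod t)))
    (f := fun g => ∑ z, g z) (t := univ) (fun _ _ => by simp)
  simp only [hfib, sum_const, card_univ, ZMod.card, Fintype.card_fun, smul_eq_mul] at h
  have hs := NeZero.pos s
  have ht := NeZero.pos t
  rw [show t ^ s = t * t ^ (s - 1) by rw [← pow_succ', Nat.sub_add_cancel hs]] at h
  exact (Nat.eq_of_mul_eq_mul_left ht h).symm

/-- If every element of `T` is related to a unique element of `C`, then a sum of reciprocals over
`C` can be evaluated by counting the elements of `T` related to each summand. -/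
lemma finsum_one_div_eq {α β : Type*} [Nonempty α] (C : Set α) (T : Finset β) (Q : α → β → Prop)
    [∀ p, DecidablePred (Q p)] {N : ℕ} (hN : 0 < N) (n : α → ℕ)
    (huniq : ∀ g ∈ T, ∃! p, p ∈ C ∧ Q p g) (hcard : ∀ p ∈ C, #{g ∈ T | Q p g} * n p = N) :
    ∑ᶠ p ∈ C, (1 : ℚ) / n p = #T / N := by
  classical
  choose! ρ hρ hρ' using huniq
  have hC : C = (T.image ρ : Finset α) := by
    ext p
    refine ⟨fun hp => ?_, fun hp => ?_⟩
    · have h1 : 0 < #{g ∈ T | Q p g} := Nat.pos_of_mul_pos_right (by rw [hcard p hp]; exact hN)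
      obtain ⟨g, hg⟩ := card_pos.1 h1
      obtain ⟨hgT, hQ⟩ := mem_filter.1 hg
      exact mem_coe.2 (mem_image.2 ⟨g, hgT, (hρ' g hgT p ⟨hp, hQ⟩).symm⟩)
    · obtain ⟨g, hg, rfl⟩ := mem_image.1 (mem_coe.1 hp)
      exact (hρ g hg).1
  have hterm : ∀ p ∈ T.image ρ, (1 : ℚ) / n p = #{g ∈ T | ρ g = p} / N := by
    intro p hp
    have hpC : p ∈ C := by rw [hC]; exact hp
    have h1 : T.filter (Q p) = T.filter fun g => ρ g = p := by
      refine filter_congr fun g hg => ⟨fun h => (hρ' g hg p ⟨hpC, h⟩).symm, ?_⟩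
      rintro rfl
      exact (hρ g hg).2
    have h2 := hcard p hpC
    rw [h1] at h2
    have h3 : n p ≠ 0 := by
      rintro h0
      rw [h0] at h2
      omega
    rw [div_eq_div_iff (by exact_mod_cast h3) (by exact_mod_cast hN.ne'), one_mul]
    exact_mod_cast h2.symm
  rw [hC, finsum_mem_coe_finset, sum_congr rfl hterm, ← sum_div, ← Nat.cast_sum,
    ← card_eq_sum_card_image]

end Counting

section Sorting

variable {s t : ℕ}

/-- Every map from residues modulo `s` to residues modulo `t` with vanishing sum is, up to a
permutation of its argument, the reduction of an antitone profile. -/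
lemma exists_antitone_profile [NeZero s] [NeZero t] (g : ZMod s → ZMod t) (hg : ∑ z, g z = 0) :
    ∃ f, IsProfile s t f ∧ Antitone f ∧
      ∃ σ : Equiv.Perm (ZMod s), profileMod s t f ∘ σ = g := by
  have hs : 0 < s := NeZero.pos s
  have hs' : (0 : ℤ) < s := by exact_mod_cast hs
  obtain ⟨τ, hτ⟩ : ∃ τ : Equiv.Perm (ZMod s),
      ∀ i j : ℕ, i ≤ j → j < s → (g (τ j)).val ≤ (g (τ i)).val := by
    let e : Fin s ≃ ZMod s :=
      ⟨fun i => (i.val : ZMod s), fun z => ⟨z.val, z.val_lt⟩,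
        fun i => Fin.ext (ZMod.val_cast_of_lt i.isLt), fun z => ZMod.natCast_zmod_val z⟩
    let v : Fin s → ℕᵒᵈ := fun i => OrderDual.toDual (g (e i)).val
    have hv : Monotone (v ∘ Tuple.sort v) := Tuple.monotone_sort v
    refine ⟨e.symm.trans ((Tuple.sort v).trans e), fun i j hij hj => ?_⟩
    have he : ∀ (k : ℕ) (hk : k < s), e.symm (k : ZMod s) = ⟨k, hk⟩ :=
      fun k hk => Fin.ext (ZMod.val_cast_of_lt hk)
    simp only [Equiv.trans_apply, he i (hij.trans_lt hj), he j hj]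
    exact hv (show (⟨i, hij.trans_lt hj⟩ : Fin s) ≤ ⟨j, hj⟩ from hij)
  set k : ℤ → ℤ := fun j => ((g (τ (j : ZMod s))).val : ℤ) with hk
  have hk0 : ∀ j, 0 ≤ k j := fun j => by positivity
  have hkt : ∀ j, k j < t := fun j => by
    simp only [hk]
    exact_mod_cast ZMod.val_lt _
  set F : ℤ → ℤ := fun j => k j - t * (j / s) with hF
  have hFadd : ∀ j, F (j + s) = F j + -(t : ℤ) := by
    intro j
    simp only [hF, hk]
    rw [Int.add_ediv_of_dvd_right dvd_rfl, Int.ediv_self hs'.ne']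
    push_cast
    rw [ZMod.natCast_self, add_zero]
    ring
  have hFmod : ∀ j : ℤ, (F j : ZMod t) = g (τ j) := by
    intro j
    simp [hF, hk]
  have hFanti : Antitone F := by
    refine antitone_int_of_succ_le fun j => ?_
    have h1 := Int.emod_add_mul_ediv j s
    have h2 := Int.emod_nonneg j hs'.ne'
    have h3 := Int.emod_lt_of_pos j hs'
    simp only [hF]
    rcases lt_or_ge (j % s + 1) (s : ℤ) with h4 | h4
    · have hdiv : (j + 1) / s = j / s := by
        rw [Int.ediv_eq_iff_of_pos hs']
        constructor <;> linarith
      have hle := hτ (j % s).toNat ((j % s).toNat + 1) (by omega) (by omega)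
      have hc : (((j % s).toNat : ℕ) : ZMod s) = (j : ZMod s) := by
        rw [← Int.cast_natCast, Int.toNat_of_nonneg h2, ZMod.intCast_mod]
      push_cast at hle
      rw [hc] at hle
      rw [hdiv]
      have : k (j + 1) ≤ k j := by
        simp only [hk]
        push_cast
        exact_mod_cast hle
      linarith
    · have hdiv : (j + 1) / s = j / s + 1 := by
        rw [Int.ediv_eq_iff_of_pos hs']
        constructor <;> nlinarith
      rw [hdiv]
      have := hk0 j
      have := hkt (j + 1)
      linarith
  have hsum : ((∑ i ∈ range s, F i : ℤ) : ZMod t) = 0 := by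
    rw [sum_range_eq_sum_zmod F]
    push_cast
    simp only [hFmod]
    simpa using (Equiv.sum_comp τ g).trans hg
  obtain ⟨q, hq⟩ := (ZMod.intCast_zmod_eq_zero_iff_dvd _ _).1 hsum
  have hf : IsProfile s t fun j => F (q + j) := by
    refine ⟨fun j => ?_, ?_⟩
    · rw [← add_assoc, hFadd, sub_eq_add_neg]
    · rw [sum_window_add hFadd, hq]
      ring
  refine ⟨_, hf, fun i j hij => hFanti (by omega),
    τ.symm.trans (Equiv.addLeft (-(q : ZMod s))), ?_⟩
  ext z
  simp [profileMod, hFmod]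

end Sorting

/-- The sum over all `(s,t)`-cores of the reciprocals of the orders of their
stabilisers under the level `t` action of `W̃_s` equals `t^(s-1)/s!`. -/
theorem denom_sum (s t : ℕ) (hs : 2 ≤ s) (ht : 0 < t) (hst : Nat.Coprime s t)
    (Φ : Equiv.Perm ℤ → Equiv.Perm ℤ) (hΦ : IsLevelTAction s t hs Φ) :
    (∑ᶠ p ∈ {p : Partn | IsCore s p ∧ IsCore t p},
        (1 : ℚ) / (Nat.card {w : Equiv.Perm ℤ //
          w ∈ AffSymSet s ∧ ⇑(Φ w) '' sSet s p = sSet s p})) =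
      (t : ℚ) ^ (s - 1) / (Nat.factorial s) := by
  classical
  have hs0 : 0 < s := by omega
  have : NeZero s := ⟨hs0.ne'⟩
  have : NeZero t := ⟨ht.ne'⟩
  have : Nonempty Partn := ⟨⟨fun _ => 0, antitone_const, 0, fun _ _ => rfl⟩⟩
  rw [finsum_one_div_eq _ {g : ZMod s → ZMod t | ∑ z, g z = 0}
    (fun p g => ∃ f, Encodes s t p f ∧ ∃ σ : Equiv.Perm (ZMod s), profileMod s t f ∘ σ = g)
    (Nat.factorial_pos s), card_filter_sum_eq_zero, Nat.cast_pow]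
  · intro g hg
    obtain ⟨f, hf, hanti, σ, hσ⟩ := exists_antitone_profile g (mem_filter.1 hg).2
    obtain ⟨p, hps, hpt, hp⟩ := exists_core_encodes hs0 hst ht hf hanti
    refine ⟨p, ⟨⟨hps, hpt⟩, f, hp, σ, hσ⟩, ?_⟩
    rintro q ⟨⟨hqs, hqt⟩, f', hq, σ', hσ'⟩
    obtain ⟨f'', hq', hf', hanti'⟩ := exists_encodes hs0 hst ht hqs hqt
    obtain rfl := hq.profile_eq hq'
    have hff : f' = f := by
      refine hf'.eq_of_antitone hs ht hf hanti' hanti (σ'.symm.trans σ) fun z => ?_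
      have := congrFun (hσ.trans hσ'.symm) (σ'.symm z)
      simpa using this
    exact hq.partn_eq hs0 hst (hff ▸ hp)
  · rintro p ⟨hps, hpt⟩
    obtain ⟨f, hp, hf, hanti⟩ := exists_encodes hs0 hst ht hps hpt
    have hsum : ∑ z, profileMod s t f z = 0 := by
      have := congrArg (Int.cast : ℤ → ZMod t) hf.sum_eq_zero
      rw [sum_range_eq_sum_zmod] at this
      simpa [profileMod] using this
    have h := card_fiber_mul_card_stabiliser {g : ZMod s → ZMod t | ∑ z, g z = 0}
      (profileMod s t f) fun σ => mem_filter.2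
        ⟨mem_univ _, (Equiv.sum_comp σ (profileMod s t f)).trans hsum⟩
    rw [ZMod.card] at h
    rw [card_stabiliser_eq hs ht hst hΦ hp hf, ← h]
    congr 2
    refine filter_congr fun g _ => ⟨?_, fun h => ⟨f, hp, h⟩⟩
    rintro ⟨f', hp', h⟩
    rwa [hp.profile_eq hp']
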